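/- arXiv:2404.02355 — 7 statements merged into one kernel-verified Lean document; each statement's English description precedes it below -/
import Mathlib

section
/- Let X be a complex Hilbert space, let A and B be closed linear relations in X forming a dual pair (A ⊆ B*), and suppose that (A*)_s(f) = B_s(f) for all f ∈ D(B) and (B*)_s(f) = A_s(f) for all f ∈ D(A). Then D(A*) decomposes as the orthogonal direct sum D(A*) = D(B) ⊕_A N(1 + B*A*), where the orthogonality is with respect to the graph inner product ⟨f,g⟩_{+A} = ⟨f,g⟩ + ⟨(A*)_s(f),(A*)_s(g)⟩ on D(A*). -/
/-!
Since `A ⊆ B*`, also `B ⊆ A*`. For `(f, k) ∈ A*`, project orthogonally onto the closed subspace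
`B` of the Hilbert sum `X ⊕ X`: `(f, k) = (g, m) + (h, l)` with `(g, m) ∈ B` and `(h, l) ⊥ B`
(`exists_add_mem_adjRel`). Orthogonality to `B` says exactly `(l, -h) ∈ B*`, while
`(h, l) = (f, k) - (g, m) ∈ A*`, so `(h, -h) ∈ B*A*` and `f = g + h` is the decomposition.

For orthogonality, let `(h, y) ∈ A*`, `(y, -h) ∈ B*` and `g ∈ D(B)`. Pairing `(y, -h)` with
`(g, B_s g) ∈ B` gives `⟪g, h⟫ + ⟪B_s g, y⟫ = 0`. As `B_s g = (A*)_s g` is orthogonal to `A*(0)`,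
which contains `y - (A*)_s h`, the vector `y` may be replaced by `(A*)_s h`.
-/

local notation "⟪" x ", " y "⟫" => @inner ℂ _ _ x y

noncomputable section

variable {X : Type*} [NormedAddCommGroup X] [InnerProductSpace ℂ X]

/-- The adjoint `T*` of a linear relation `T ⊆ X × X`:
`T* = {(f,g) : ⟪g,x⟫ = ⟪f,y⟫ for all (x,y) ∈ T}`. -/
def adjRel (T : Submodule ℂ (X × X)) : Submodule ℂ (X × X) where
  carrier := {p | ∀ q ∈ T, ⟪p.2, q.1⟫ = ⟪p.1, q.2⟫}
  add_mem' := by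
    intro p p' hp hp' q hq
    simp only [Prod.fst_add, Prod.snd_add, inner_add_left, hp q hq, hp' q hq]
  zero_mem' := by intro q hq; simp
  smul_mem' := by
    intro c p hp q hq
    simp only [Prod.smul_fst, Prod.smul_snd, inner_smul_left, hp q hq]

/-- The domain `D(T)` of a linear relation. -/
def relDom (T : Submodule ℂ (X × X)) : Submodule ℂ X := T.map (LinearMap.fst ℂ X X)

/-- The multivalued part `T(0) = {y : (0,y) ∈ T}` of a linear relation. -/
def relMul (T : Submodule ℂ (X × X)) : Submodule ℂ X := T.comap (LinearMap.inr ℂ X X)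

/-- The null space `N(T) = {x : (x,0) ∈ T}` of a linear relation. -/
def relKer (T : Submodule ℂ (X × X)) : Submodule ℂ X := T.comap (LinearMap.inl ℂ X X)

/-- The operator part `T_s` of a (closed) linear relation, sending `f ∈ D(T)` to the unique
element of `T(f)` orthogonal to `T(0)` (junk value `0` outside `D(T)`). -/
def opPart (T : Submodule ℂ (X × X)) (f : X) : X :=
  @dite X (∃ y, (f, y) ∈ T ∧ y ∈ (relMul T)ᗮ) (Classical.dec _)
    (fun h => h.choose) (fun _ => 0)

/-- The composition `S ∘ T = {(x,z) : ∃ y, (x,y) ∈ T and (y,z) ∈ S}` of linear relations. -/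
def relComp (S T : Submodule ℂ (X × X)) : Submodule ℂ (X × X) where
  carrier := {p | ∃ y, (p.1, y) ∈ T ∧ (y, p.2) ∈ S}
  add_mem' := by
    rintro p p' ⟨y, h1, h2⟩ ⟨y', h1', h2'⟩
    exact ⟨y + y', T.add_mem h1 h1', S.add_mem h2 h2'⟩
  zero_mem' := ⟨0, T.zero_mem, S.zero_mem⟩
  smul_mem' := by
    rintro c p ⟨y, h1, h2⟩
    exact ⟨c • y, T.smul_mem c h1, S.smul_mem c h2⟩

/-- `N(1 + R) = {x : (x, -x) ∈ R}` for a linear relation `R`. -/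
def relKerOnePlus (R : Submodule ℂ (X × X)) : Submodule ℂ X :=
  R.comap ((LinearMap.id : X →ₗ[ℂ] X).prod (-LinearMap.id))

/-- The dimension of the quotient `U / V` (for submodules `V ⊆ U`). -/
def quotDim (U V : Submodule ℂ X) : Cardinal :=
  Module.rank ℂ (↥U ⧸ V.comap U.subtype)

/-- The relation `S = [[0, A], [B, 0]]` in `X² × X²` associated with a dual pair `{A, B}`:
`S = {((x₁,x₂),(y₁,y₂)) : (x₁,y₂) ∈ B and (x₂,y₁) ∈ A}`. -/
def dualS (A B : Submodule ℂ (X × X)) : Submodule ℂ ((X × X) × (X × X)) where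
  carrier := {p | (p.1.1, p.2.2) ∈ B ∧ (p.1.2, p.2.1) ∈ A}
  add_mem' := by
    rintro p p' ⟨h1, h2⟩ ⟨h1', h2'⟩
    exact ⟨B.add_mem h1 h1', A.add_mem h2 h2'⟩
  zero_mem' := ⟨B.zero_mem, A.zero_mem⟩
  smul_mem' := by
    rintro c p ⟨h1, h2⟩
    exact ⟨B.smul_mem c h1, A.smul_mem c h2⟩

/-- The adjoint of a linear relation in `X × X`, where `X × X` carries the product
inner product `⟪(x₁,x₂),(u₁,u₂)⟫ = ⟪x₁,u₁⟫ + ⟪x₂,u₂⟫`. -/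
def adjRel2 (S : Submodule ℂ ((X × X) × (X × X))) : Submodule ℂ ((X × X) × (X × X)) where
  carrier := {p | ∀ q ∈ S,
    ⟪p.2.1, q.1.1⟫ + ⟪p.2.2, q.1.2⟫ = ⟪p.1.1, q.2.1⟫ + ⟪p.1.2, q.2.2⟫}
  add_mem' := by
    intro p p' hp hp' q hq
    simp only [Prod.fst_add, Prod.snd_add, inner_add_left]
    rw [show ∀ a b c d : ℂ, a + b + (c + d) = a + c + (b + d) by intros; ring,
      hp q hq, hp' q hq]; ring
  zero_mem' := by intro q hq; simp
  smul_mem' := by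
    intro c p hp q hq
    simp only [Prod.smul_fst, Prod.smul_snd, inner_smul_left, ← mul_add, hp q hq]

/-- For a relation `R` on `X × X` and `c : ℂ`, the subspace `{f : (f, c • f) ∈ R}`;
for `R = S*` and `c = ∓i` this is the deficiency space `N(S* ± i)`. -/
def eigenSp (R : Submodule ℂ ((X × X) × (X × X))) (c : ℂ) : Submodule ℂ (X × X) :=
  R.comap ((LinearMap.id : (X × X) →ₗ[ℂ] (X × X)).prod (c • LinearMap.id))


theorem isClosed_adjRel (T : Submodule ℂ (X × X)) : IsClosed (adjRel T : Set (X × X)) := by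
  have : (adjRel T : Set (X × X)) = ⋂ q ∈ T, {p | ⟪p.2, q.1⟫ = ⟪p.1, q.2⟫} := by
    ext p
    simp only [Set.mem_iInter]
    exact Iff.rfl
  rw [this]
  exact isClosed_biInter fun q _ => isClosed_eq (by fun_prop) (by fun_prop)

/-- For a closed relation the operator part is not a junk value on the domain: subtracting from
any `y ∈ T(f)` its projection onto the closed subspace `T(0)` gives the required element. -/
theorem opPart_spec [CompleteSpace X] {T : Submodule ℂ (X × X)}
    (hT : IsClosed (T : Set (X × X))) {f : X} (hf : f ∈ relDom T) :
    (f, opPart T f) ∈ T ∧ opPart T f ∈ (relMul T)ᗮ := by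
  have hex : ∃ y, (f, y) ∈ T ∧ y ∈ (relMul T)ᗮ := by
    obtain ⟨⟨f', y⟩, hy, rfl⟩ := hf
    have hcl : IsClosed (relMul T : Set X) :=
      hT.preimage (f := fun y : X => ((0 : X), y)) (by fun_prop)
    have : CompleteSpace (relMul T) := hcl.completeSpace_coe
    obtain ⟨m, hm, z, hz, rfl⟩ := (relMul T).exists_add_mem_mem_orthogonal y
    refine ⟨z, ?_, hz⟩
    have hm' : ((0 : X), m) ∈ T := hm
    simpa using T.sub_mem hy hm'
  unfold opPart
  rw [dif_pos hex]
  exact hex.choose_spec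

theorem le_adjRel_symm {A B : Submodule ℂ (X × X)} (h : A ≤ adjRel B) : B ≤ adjRel A := by
  intro p hp q hq
  have := h hq p hp
  rw [← inner_conj_symm, ← this, inner_conj_symm]

/-- Orthogonal decomposition of `X × X` along a closed relation `B`, the orthogonality of `(h, l)`
to `B` in the Hilbert sum `X ⊕ X` being rewritten as `(l, -h) ∈ B*`. -/
theorem exists_add_mem_adjRel [CompleteSpace X] {B : Submodule ℂ (X × X)}
    (hB : IsClosed (B : Set (X × X))) (p : X × X) :
    ∃ q ∈ B, ∃ r : X × X, (r.2, -r.1) ∈ adjRel B ∧ p = q + r := by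
  -- The norm of `X × X` is the sup norm, so the projection is taken in `WithLp 2 (X × X)`.
  let e := WithLp.prodContinuousLinearEquiv 2 ℂ X X
  let B' : Submodule ℂ (WithLp 2 (X × X)) := B.comap (e : WithLp 2 (X × X) →ₗ[ℂ] X × X)
  have hcl : IsClosed (B' : Set (WithLp 2 (X × X))) := hB.preimage e.continuous
  have : CompleteSpace B' := hcl.completeSpace_coe
  obtain ⟨q, hq, r, hr, hqr⟩ := B'.exists_add_mem_mem_orthogonal (e.symm p)
  refine ⟨e q, hq, e r, ?_, ?_⟩
  · intro s hs
    have hs' : e.symm s ∈ B' := by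
      change e (e.symm s) ∈ B
      simpa using hs
    have h0 := Submodule.inner_left_of_mem_orthogonal hs' hr
    rw [WithLp.prod_inner_apply] at h0
    change ⟪(e r).1, s.1⟫ + ⟪(e r).2, s.2⟫ = 0 at h0
    rw [inner_neg_left]
    linear_combination -h0
  · rw [← map_add, ← hqr, ContinuousLinearEquiv.apply_symm_apply]

/-- Lemma 2.4, eq. (2.1). `D(A*) = D(B) ⊕_A N(1 + B*A*)`, an orthogonal
direct sum with respect to the graph inner product
`⟪f,g⟫₊ₐ = ⟪f,g⟫ + ⟪(A*)_s f, (A*)_s g⟫` on `D(A*)`. -/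
theorem domAdjA_decomposition [CompleteSpace X] (A B : Submodule ℂ (X × X))
    (hA : IsClosed (A : Set (X × X))) (hB : IsClosed (B : Set (X × X)))
    (hdual : A ≤ adjRel B)
    (hopB : ∀ f ∈ relDom B, opPart (adjRel A) f = opPart B f)
    (hopA : ∀ f ∈ relDom A, opPart (adjRel B) f = opPart A f) :
    (∀ f ∈ relDom (adjRel A), ∃ g ∈ relDom B,
        ∃ h ∈ relKerOnePlus (relComp (adjRel B) (adjRel A)), f = g + h) ∧
    (∀ g ∈ relDom B, ∀ h ∈ relKerOnePlus (relComp (adjRel B) (adjRel A)),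
        ⟪g, h⟫ + ⟪opPart (adjRel A) g, opPart (adjRel A) h⟫ = 0) := by
  have hBA : B ≤ adjRel A := le_adjRel_symm hdual
  constructor
  · rintro f ⟨p, hp, rfl⟩
    obtain ⟨q, hq, r, hr, rfl⟩ := exists_add_mem_adjRel hB p
    have hrA : r ∈ adjRel A := by simpa using (adjRel A).sub_mem hp (hBA hq)
    exact ⟨q.1, ⟨q, hq, rfl⟩, r.1, ⟨r.2, hrA, hr⟩, rfl⟩
  · rintro g hg h ⟨y, hy, hyB⟩
    change (h, y) ∈ adjRel A at hy
    change (y, -h) ∈ adjRel B at hyB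
    have hgB := (opPart_spec hB hg).1
    have hgA := (opPart_spec (isClosed_adjRel A) (f := g) ⟨_, hBA hgB, rfl⟩).2
    have hh := (opPart_spec (isClosed_adjRel A) (f := h) ⟨_, hy, rfl⟩).1
    rw [← hopB g hg] at hgB
    -- `y` and `(A*)_s h` differ by an element of `A*(0)`, to which `(A*)_s g` is orthogonal.
    have hm : y - opPart (adjRel A) h ∈ relMul (adjRel A) := by
      change ((0 : X), y - opPart (adjRel A) h) ∈ adjRel A
      simpa using (adjRel A).sub_mem hy hh
    have h1 := Submodule.inner_left_of_mem_orthogonal hm hgA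
    have h2 : ⟪-h, g⟫ = ⟪y, opPart (adjRel A) g⟫ := hyB _ hgB
    have h3 := congrArg (starRingEnd ℂ) h2
    rw [inner_conj_symm, inner_conj_symm, inner_neg_right] at h3
    rw [inner_sub_right] at h1
    linear_combination -h1 - h3

end
end

section
/- Let X be a complex Hilbert space and let A and B be closed linear relations in X forming a dual pair (A ⊆ B*) such that B*(0) ∩ N(A*) = {0} and A*(0) ∩ N(B*) = {0}. Then for every g ∈ N(1 + B*A*) there exists a unique h ∈ N(1 + A*B*) such that (g,h) ∈ A* and (h,−g) ∈ B*. -/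
local notation "⟪" x ", " y "⟫" => @inner ℂ _ _ x y

noncomputable section

variable {X : Type*} [NormedAddCommGroup X] [InnerProductSpace ℂ X]

/-- Lemma 2.5, Step 1. If `B*(0) ∩ N(A*) = {0}` and `A*(0) ∩ N(B*) = {0}`,
then for every `g ∈ N(1 + B*A*)` there is a unique `h ∈ N(1 + A*B*)` with `(g,h) ∈ A*` and
`(h,-g) ∈ B*`. -/
theorem exists_unique_partner [CompleteSpace X] (A B : Submodule ℂ (X × X))
    (hA : IsClosed (A : Set (X × X))) (hB : IsClosed (B : Set (X × X)))
    (hdual : A ≤ adjRel B)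
    (hmul1 : relMul (adjRel B) ⊓ relKer (adjRel A) = ⊥)
    (hmul2 : relMul (adjRel A) ⊓ relKer (adjRel B) = ⊥) :
    ∀ g ∈ relKerOnePlus (relComp (adjRel B) (adjRel A)),
      ∃! h : X, h ∈ relKerOnePlus (relComp (adjRel A) (adjRel B)) ∧
        (g, h) ∈ adjRel A ∧ (h, -g) ∈ adjRel B := by
  rintro g ⟨h, hgh, hhg⟩
  change (g, h) ∈ adjRel A at hgh
  change (h, -g) ∈ adjRel B at hhg
  refine ⟨h, ⟨⟨-g, hhg, ?_⟩, hgh, hhg⟩, ?_⟩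
  · exact (adjRel A).neg_mem hgh
  · rintro k ⟨-, hgk, hkg⟩
    -- Two partners of `g` differ by an element of `A*(0) ∩ N(B*)`.
    have hmem : k - h ∈ relMul (adjRel A) ⊓ relKer (adjRel B) := by
      constructor
      · have := (adjRel A).sub_mem hgk hgh
        rwa [Prod.mk_sub_mk, sub_self] at this
      · have := (adjRel B).sub_mem hkg hhg
        rwa [Prod.mk_sub_mk, sub_self] at this
    rw [hmul2, Submodule.mem_bot] at hmem
    exact sub_eq_zero.mp hmem

end
end

section
/- Let X be a complex Hilbert space and let A and B be closed linear relations in X forming a dual pair (A ⊆ B*) such that B*(0) ∩ N(A*) = {0} and A*(0) ∩ N(B*) = {0}. Then there exists a linear bijection Q from N(1 + B*A*) onto N(1 + A*B*) characterized by (g, Q(g)) ∈ A* and (Q(g), −g) ∈ B* for all g ∈ N(1 + B*A*); in particular, N(1 + B*A*) and N(1 + A*B*) are linearly isomorphic. -/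
/-!
For `g ∈ N(1 + B*A*)` there is an intermediate `y` with `(g, y) ∈ A*` and `(y, -g) ∈ B*`. It is
unique because `A*(0) ∩ N(B*) = {0}` (`intermediate_unique`), so `Q g = y` is well defined and
linear. Negating the first pair gives `(-g, -y) ∈ A*`, so `y ∈ N(1 + A*B*)` with intermediate
element `-g`. This is symmetric in the two kernels: `B*(0) ∩ N(A*) = {0}` makes `-g` unique for
`y`, which is injectivity, and the negative of an intermediate element of `y` is a preimage of `y`.
-/

local notation "⟪" x ", " y "⟫" => @inner ℂ _ _ x y

noncomputable section

variable {X : Type*} [NormedAddCommGroup X] [InnerProductSpace ℂ X]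

/-- An element `y` with `(g, y) ∈ S` and `(y, -g) ∈ R` is determined by `g`: the difference of two
of them lies in `S(0) ∩ N(R)`. -/
theorem intermediate_unique {S R : Submodule ℂ (X × X)} (h : relMul S ⊓ relKer R = ⊥)
    {g y y' : X} (h1 : (g, y) ∈ S) (h2 : (y, -g) ∈ R) (h1' : (g, y') ∈ S)
    (h2' : (y', -g) ∈ R) : y = y' := by
  have hd : y - y' ∈ relMul S ⊓ relKer R := by
    refine ⟨?_, ?_⟩
    · change ((0 : X), y - y') ∈ S
      simpa using S.sub_mem h1 h1'
    · change (y - y', (0 : X)) ∈ R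
      simpa using R.sub_mem h2 h2'
  rw [h, Submodule.mem_bot] at hd
  exact sub_eq_zero.mp hd

/-- Lemma 2.5. Under the conditions `B*(0) ∩ N(A*) = {0}` and
`A*(0) ∩ N(B*) = {0}` there is a linear bijection `Q : N(1 + B*A*) → N(1 + A*B*)` with
`(g, Q g) ∈ A*` and `(Q g, -g) ∈ B*` for all `g`; in particular the two kernels are
linearly isomorphic. -/
theorem exists_linear_bijection_kerOnePlus [CompleteSpace X] (A B : Submodule ℂ (X × X))
    (hA : IsClosed (A : Set (X × X))) (hB : IsClosed (B : Set (X × X)))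
    (hdual : A ≤ adjRel B)
    (hmul1 : relMul (adjRel B) ⊓ relKer (adjRel A) = ⊥)
    (hmul2 : relMul (adjRel A) ⊓ relKer (adjRel B) = ⊥) :
    ∃ Q : ↥(relKerOnePlus (relComp (adjRel B) (adjRel A))) →ₗ[ℂ]
        ↥(relKerOnePlus (relComp (adjRel A) (adjRel B))),
      Function.Bijective Q ∧
      ∀ g : ↥(relKerOnePlus (relComp (adjRel B) (adjRel A))),
        ((g : X), (Q g : X)) ∈ adjRel A ∧ ((Q g : X), -(g : X)) ∈ adjRel B := by
  have hex : ∀ g : ↥(relKerOnePlus (relComp (adjRel B) (adjRel A))),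
      ∃ y : ↥(relKerOnePlus (relComp (adjRel A) (adjRel B))),
        ((g : X), (y : X)) ∈ adjRel A ∧ ((y : X), -(g : X)) ∈ adjRel B := by
    rintro ⟨g, y, h1, h2⟩
    exact ⟨⟨y, -g, h2, (adjRel A).neg_mem h1⟩, h1, h2⟩
  choose q hq1 hq2 using hex
  have huniq : ∀ (g : ↥(relKerOnePlus (relComp (adjRel B) (adjRel A))))
      (y : ↥(relKerOnePlus (relComp (adjRel A) (adjRel B)))),
      ((g : X), (y : X)) ∈ adjRel A → ((y : X), -(g : X)) ∈ adjRel B → q g = y :=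
    fun g y h1 h2 => Subtype.ext (intermediate_unique hmul2 (hq1 g) (hq2 g) h1 h2)
  refine ⟨{ toFun := q, map_add' := ?_, map_smul' := ?_ }, ⟨?_, ?_⟩, fun g => ⟨hq1 g, hq2 g⟩⟩
  · intro g g'
    refine huniq _ _ ((adjRel A).add_mem (hq1 g) (hq1 g')) ?_
    simpa [add_comm] using (adjRel B).add_mem (hq2 g) (hq2 g')
  · intro c g
    refine huniq _ _ ((adjRel A).smul_mem c (hq1 g)) ?_
    simpa using (adjRel B).smul_mem c (hq2 g)
  · -- `-g` is an intermediate element for `q g` in the product `A*B*`, hence determined by it.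
    intro g g' h
    have h : q g = q g' := h
    refine Subtype.ext (neg_injective (intermediate_unique hmul1 (hq2 g)
      ((adjRel A).neg_mem (hq1 g)) ?_ ?_))
    · rw [h]; exact hq2 g'
    · rw [h]; exact (adjRel A).neg_mem (hq1 g')
  · rintro ⟨y, z, h1, h2⟩
    have h1 : (y, z) ∈ adjRel B := h1
    have h2 : (z, -y) ∈ adjRel A := h2
    have h3 : (-z, y) ∈ adjRel A := by simpa using (adjRel A).neg_mem h2
    have h4 : (y, - -z) ∈ adjRel B := by simpa using h1
    exact ⟨⟨-z, y, h3, h4⟩, huniq _ _ h3 h4⟩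

end
end

section
/- Let X be a complex Hilbert space and let A and B be closed linear relations in X forming a dual pair (A ⊆ B*) such that B*(0) ∩ N(A*) = {0} and A*(0) ∩ N(B*) = {0}. Then dim N(1 + B*A*) = dim N(1 + A*B*). -/
/-!
Both null spaces are coordinate projections of one space: the space `E` of all pairs `(x, y)`
with `(x, y) ∈ A*` and `(y, -x) ∈ B*`.

The first coordinates of `E` form `N(1 + B*A*)`, by definition of the product. Since
`(x, y) ∈ A*` is equivalent to `(-x, -y) ∈ A*`, the second coordinates of `E` form `N(1 + A*B*)`.
A pair `(0, y) ∈ E` has `y ∈ A*(0) ∩ N(B*)`, and a pair `(x, 0) ∈ E` has `x ∈ B*(0) ∩ N(A*)`,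
so under the two hypotheses both projections are injective on `E`, and both null spaces have the
dimension of `E`.

The lemmas below are stated for relations `S`, `T`, and applied with `S = A*` and `T = B*`.
-/

local notation "⟪" x ", " y "⟫" => @inner ℂ _ _ x y

noncomputable section

variable {X : Type*} [NormedAddCommGroup X] [InnerProductSpace ℂ X]

/-- The space of pairs `(x, y)` with `(x, y) ∈ S` and `(y, -x) ∈ T`, that is, of the elements of
`N(1 + TS)` together with the intermediate point witnessing membership. -/
def pairSpace (S T : Submodule ℂ (X × X)) : Submodule ℂ (X × X) :=
  S ⊓ T.comap ((LinearMap.snd ℂ X X).prod (-LinearMap.fst ℂ X X))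

lemma mem_pairSpace {S T : Submodule ℂ (X × X)} {p : X × X} :
    p ∈ pairSpace S T ↔ (p.1, p.2) ∈ S ∧ (p.2, -p.1) ∈ T := by
  simp [pairSpace]

lemma mem_relKerOnePlus_relComp {S T : Submodule ℂ (X × X)} {x : X} :
    x ∈ relKerOnePlus (relComp T S) ↔ ∃ y, (x, y) ∈ S ∧ (y, -x) ∈ T :=
  Iff.rfl

lemma range_fst_pairSpace (S T : Submodule ℂ (X × X)) :
    LinearMap.range ((LinearMap.fst ℂ X X).domRestrict (pairSpace S T)) =
      relKerOnePlus (relComp T S) := by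
  ext x
  rw [mem_relKerOnePlus_relComp]
  constructor
  · rintro ⟨⟨p, hp⟩, rfl⟩
    exact ⟨p.2, mem_pairSpace.1 hp⟩
  · rintro ⟨y, hy⟩
    exact ⟨⟨(x, y), mem_pairSpace.2 hy⟩, rfl⟩

lemma range_snd_pairSpace (S T : Submodule ℂ (X × X)) :
    LinearMap.range ((LinearMap.snd ℂ X X).domRestrict (pairSpace S T)) =
      relKerOnePlus (relComp S T) := by
  ext y
  rw [mem_relKerOnePlus_relComp]
  -- A pair `(x, y)` corresponds to the intermediate point `-x` between `y` and `-y`.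
  constructor
  · rintro ⟨⟨p, hp⟩, rfl⟩
    obtain ⟨h1, h2⟩ := mem_pairSpace.1 hp
    exact ⟨-p.1, h2, S.neg_mem h1⟩
  · rintro ⟨z, h1, h2⟩
    exact ⟨⟨(-z, y), mem_pairSpace.2 ⟨by simpa using S.neg_mem h2, by simpa using h1⟩⟩, rfl⟩

lemma injective_fst_pairSpace {S T : Submodule ℂ (X × X)} (h : relMul S ⊓ relKer T = ⊥) :
    Function.Injective ((LinearMap.fst ℂ X X).domRestrict (pairSpace S T)) := by
  rw [injective_iff_map_eq_zero]
  rintro ⟨⟨x, y⟩, hp⟩ (rfl : x = 0)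
  obtain ⟨h1, h2⟩ := mem_pairSpace.1 hp
  have hy : y ∈ relMul S ⊓ relKer T := ⟨h1, by simpa [relKer] using h2⟩
  rw [h, Submodule.mem_bot] at hy
  subst hy
  rfl

lemma injective_snd_pairSpace {S T : Submodule ℂ (X × X)} (h : relMul T ⊓ relKer S = ⊥) :
    Function.Injective ((LinearMap.snd ℂ X X).domRestrict (pairSpace S T)) := by
  rw [injective_iff_map_eq_zero]
  rintro ⟨⟨x, y⟩, hp⟩ (rfl : y = 0)
  obtain ⟨h1, h2⟩ := mem_pairSpace.1 hp
  have hx : x ∈ relMul T ⊓ relKer S := ⟨by simpa [relMul] using T.neg_mem h2, h1⟩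
  rw [h, Submodule.mem_bot] at hx
  subst hx
  rfl

/-- Lemma 2.6. If `B*(0) ∩ N(A*) = {0}` and `A*(0) ∩ N(B*) = {0}`, then
`dim N(1 + B*A*) = dim N(1 + A*B*)`. -/
theorem rank_kerOnePlus_eq [CompleteSpace X] (A B : Submodule ℂ (X × X))
    (hA : IsClosed (A : Set (X × X))) (hB : IsClosed (B : Set (X × X)))
    (hdual : A ≤ adjRel B)
    (hmul1 : relMul (adjRel B) ⊓ relKer (adjRel A) = ⊥)
    (hmul2 : relMul (adjRel A) ⊓ relKer (adjRel B) = ⊥) :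
    Module.rank ℂ ↥(relKerOnePlus (relComp (adjRel B) (adjRel A))) =
      Module.rank ℂ ↥(relKerOnePlus (relComp (adjRel A) (adjRel B))) := by
  rw [← range_fst_pairSpace, ← range_snd_pairSpace,
    rank_range_of_injective _ (injective_fst_pairSpace hmul2),
    rank_range_of_injective _ (injective_snd_pairSpace hmul1)]

end
end

section
/- Let X be a complex Hilbert space, let A and B be closed linear relations in X, and let S be the linear relation in X × X defined by S = {((x₁,x₂),(y₁,y₂)) : (x₁,y₂) ∈ B and (x₂,y₁) ∈ A}. Then the adjoint of S equals S* = {((f₁,f₂),(g₁,g₂)) : (f₂,g₁) ∈ B* and (f₁,g₂) ∈ A*}. -/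
local notation "⟪" x ", " y "⟫" => @inner ℂ _ _ x y

noncomputable section

variable {X : Type*} [NormedAddCommGroup X] [InnerProductSpace ℂ X]

/-- Lemma 2.9. For `S = [[0,A],[B,0]]`, the adjoint in `X² × X²` is
`S* = [[0,B*],[A*,0]]`, i.e. `S* = {((f₁,f₂),(g₁,g₂)) : (f₂,g₁) ∈ B* and (f₁,g₂) ∈ A*}`. -/
theorem adjRel2_dualS [CompleteSpace X] (A B : Submodule ℂ (X × X))
    (hA : IsClosed (A : Set (X × X))) (hB : IsClosed (B : Set (X × X))) :
    adjRel2 (dualS A B) = dualS (adjRel B) (adjRel A) := by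
  ext p
  constructor
  · intro hp
    -- Testing against elements of `S` with one of the two components zero decouples the identity.
    refine ⟨fun q hq => ?_, fun q hq => ?_⟩
    · simpa using hp ((0, q.1), (q.2, 0)) ⟨B.zero_mem, hq⟩
    · simpa using hp ((q.1, 0), (0, q.2)) ⟨hq, A.zero_mem⟩
  · rintro ⟨h1, h2⟩ q ⟨hB', hA'⟩
    have e1 := h1 _ hA'
    have e2 := h2 _ hB'
    simp only at e1 e2
    rw [e1, e2, add_comm]

end
end

section
/- Let X be a complex Hilbert space and let A and B be closed linear relations in X forming a dual pair (A ⊆ B*) such that B*(0) ∩ N(A*) = {0} and A*(0) ∩ N(B*) = {0}. Let S be the linear relation in X × X defined by S = {((x₁,x₂),(y₁,y₂)) : (x₁,y₂) ∈ B and (x₂,y₁) ∈ A}. Then the map P : N(S* + i) → N(1 + B*A*) sending f = (g,h) to its first component g is a linear isomorphism of N(S* + i) onto N(1 + B*A*); in particular dim N(S* + i) = dim N(1 + B*A*), and likewise dim N(S* − i) = dim N(1 + B*A*). -/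
/-!
The adjoint of `S = [[0, A], [B, 0]]` is `[[0, B*], [A*, 0]]`, so `(g, h)` satisfies
`((g, h), c • (g, h)) ∈ S*` exactly when `(g, c • h) ∈ A*` and `(h, c • g) ∈ B*`
(`mem_eigenSp_dualS`). If `c * c = -1`, which covers both `c = -i` and `c = i`, then
`y = c • h` satisfies `(g, y) ∈ A*` and `(y, -g) ∈ B*`, so `g ∈ N(1 + B*A*)`; conversely such a
`y` gives back `h = -c • y`. If `g = 0`, then `h ∈ A*(0) ∩ N(B*) = {0}`, so the projection
`(g, h) ↦ g` is injective. The equality of dimensions follows from the resulting bijection.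
-/

local notation "⟪" x ", " y "⟫" => @inner ℂ _ _ x y

noncomputable section

variable {X : Type*} [NormedAddCommGroup X] [InnerProductSpace ℂ X]

/-- `S* = [[0, B*], [A*, 0]]`, read off on the eigenspace for `c`. -/
theorem mem_eigenSp_dualS (A B : Submodule ℂ (X × X)) (c : ℂ) (f : X × X) :
    f ∈ eigenSp (adjRel2 (dualS A B)) c ↔
      (f.1, c • f.2) ∈ adjRel A ∧ (f.2, c • f.1) ∈ adjRel B := by
  constructor
  · intro h
    refine ⟨fun q hq => ?_, fun q hq => ?_⟩
    · have := h ((0, q.1), (q.2, 0)) ⟨B.zero_mem, hq⟩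
      simpa using this
    · have := h ((q.1, 0), (0, q.2)) ⟨hq, A.zero_mem⟩
      simpa using this
  · rintro ⟨h1, h2⟩ q ⟨hqB, hqA⟩
    have e1 := h1 _ hqA
    have e2 := h2 _ hqB
    change ⟪c • f.1, q.1.1⟫ + ⟪c • f.2, q.1.2⟫ = ⟪f.1, q.2.1⟫ + ⟪f.2, q.2.2⟫
    rw [add_comm, e1, e2]

theorem fst_mem_of_mem_eigenSp (A B : Submodule ℂ (X × X)) {c : ℂ} (hc : c * c = -1)
    {f : X × X} (hf : f ∈ eigenSp (adjRel2 (dualS A B)) c) :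
    f.1 ∈ relKerOnePlus (relComp (adjRel B) (adjRel A)) := by
  obtain ⟨h1, h2⟩ := (mem_eigenSp_dualS A B c f).1 hf
  refine ⟨c • f.2, h1, ?_⟩
  have h := (adjRel B).smul_mem c h2
  rw [Prod.smul_mk, smul_smul, hc, neg_one_smul] at h
  exact h

theorem eq_zero_of_fst_eq_zero (A B : Submodule ℂ (X × X)) {c : ℂ} (hc : c * c = -1)
    (hmul : relMul (adjRel A) ⊓ relKer (adjRel B) = ⊥)
    {f : X × X} (hf : f ∈ eigenSp (adjRel2 (dualS A B)) c) (h0 : f.1 = 0) : f = 0 := by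
  obtain ⟨h1, h2⟩ := (mem_eigenSp_dualS A B c f).1 hf
  rw [h0] at h1 h2
  rw [smul_zero] at h2
  have hm : f.2 ∈ relMul (adjRel A) ⊓ relKer (adjRel B) := by
    refine ⟨?_, h2⟩
    have h := (adjRel A).smul_mem (-c) h1
    rw [Prod.smul_mk, smul_smul, neg_mul, hc, neg_neg, one_smul, smul_zero] at h
    exact h
  rw [hmul, Submodule.mem_bot] at hm
  exact Prod.ext h0 hm

theorem exists_mem_eigenSp (A B : Submodule ℂ (X × X)) {c : ℂ} (hc : c * c = -1)
    {g : X} (hg : g ∈ relKerOnePlus (relComp (adjRel B) (adjRel A))) :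
    ∃ f ∈ eigenSp (adjRel2 (dualS A B)) c, f.1 = g := by
  obtain ⟨y, h1, h2⟩ := hg
  refine ⟨(g, (-c) • y), (mem_eigenSp_dualS A B c _).2 ⟨?_, ?_⟩, rfl⟩
  · change (g, c • (-c) • y) ∈ adjRel A
    rw [smul_smul, mul_neg, hc, neg_neg, one_smul]
    exact h1
  · have h : (-c) • (y, -g) ∈ adjRel B := (adjRel B).smul_mem (-c) h2
    rw [Prod.smul_mk, neg_smul_neg] at h
    exact h

theorem rank_eigenSp_eq (A B : Submodule ℂ (X × X)) {c : ℂ} (hc : c * c = -1)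
    (hmul : relMul (adjRel A) ⊓ relKer (adjRel B) = ⊥) :
    Module.rank ℂ ↥(eigenSp (adjRel2 (dualS A B)) c) =
      Module.rank ℂ ↥(relKerOnePlus (relComp (adjRel B) (adjRel A))) := by
  let P : ↥(eigenSp (adjRel2 (dualS A B)) c) →ₗ[ℂ]
      ↥(relKerOnePlus (relComp (adjRel B) (adjRel A))) :=
    (LinearMap.fst ℂ X X).restrict fun _ hf => fst_mem_of_mem_eigenSp A B hc hf
  refine (LinearEquiv.ofBijective P ⟨?_, ?_⟩).rank_eq
  · refine (injective_iff_map_eq_zero P).2 fun f hf => Subtype.ext ?_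
    exact eq_zero_of_fst_eq_zero A B hc hmul f.2 (congrArg Subtype.val hf)
  · intro g
    obtain ⟨f, hf, hfg⟩ := exists_mem_eigenSp A B hc g.2
    exact ⟨⟨f, hf⟩, Subtype.ext hfg⟩

/-- proof of Proposition 2.10(i). The first-component projection
`P : N(S* + i) → N(1 + B*A*)`, `(g,h) ↦ g`, is a linear isomorphism onto `N(1 + B*A*)`;
in particular `dim N(S* + i) = dim N(1 + B*A*)` and likewise
`dim N(S* - i) = dim N(1 + B*A*)`. Here `N(S* ± i) = {f : (f, ∓i·f) ∈ S*}`. -/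
theorem projection_deficiency_iso [CompleteSpace X] (A B : Submodule ℂ (X × X))
    (hA : IsClosed (A : Set (X × X))) (hB : IsClosed (B : Set (X × X)))
    (hdual : A ≤ adjRel B)
    (hmul1 : relMul (adjRel B) ⊓ relKer (adjRel A) = ⊥)
    (hmul2 : relMul (adjRel A) ⊓ relKer (adjRel B) = ⊥) :
    (∀ f ∈ eigenSp (adjRel2 (dualS A B)) (-Complex.I),
        f.1 ∈ relKerOnePlus (relComp (adjRel B) (adjRel A))) ∧
    (∀ f ∈ eigenSp (adjRel2 (dualS A B)) (-Complex.I),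
      ∀ f' ∈ eigenSp (adjRel2 (dualS A B)) (-Complex.I), f.1 = f'.1 → f = f') ∧
    (∀ g ∈ relKerOnePlus (relComp (adjRel B) (adjRel A)),
        ∃ f ∈ eigenSp (adjRel2 (dualS A B)) (-Complex.I), f.1 = g) ∧
    Module.rank ℂ ↥(eigenSp (adjRel2 (dualS A B)) (-Complex.I)) =
      Module.rank ℂ ↥(relKerOnePlus (relComp (adjRel B) (adjRel A))) ∧
    Module.rank ℂ ↥(eigenSp (adjRel2 (dualS A B)) Complex.I) =
      Module.rank ℂ ↥(relKerOnePlus (relComp (adjRel B) (adjRel A))) := by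
  have hc : -Complex.I * -Complex.I = -1 := by rw [neg_mul_neg, Complex.I_mul_I]
  refine ⟨fun f hf => fst_mem_of_mem_eigenSp A B hc hf, fun f hf f' hf' h => ?_,
    fun g hg => exists_mem_eigenSp A B hc hg, rank_eigenSp_eq A B hc hmul2,
    rank_eigenSp_eq A B Complex.I_mul_I hmul2⟩
  exact sub_eq_zero.1 (eq_zero_of_fst_eq_zero A B hc hmul2 (Submodule.sub_mem _ hf hf')
    (sub_eq_zero.2 h))

end
end

section
/- Let X be a complex Hilbert space, let A and B be closed linear relations in X forming a dual pair (A ⊆ B*) such that (A*)_s(f) = B_s(f) for all f ∈ D(B), (B*)_s(f) = A_s(f) for all f ∈ D(A), B*(0) ∩ N(A*) = {0}, and A*(0) ∩ N(B*) = {0}. Let Ã be any proper extension of {A,B}, i.e., a closed relation with A ⊆ Ã ⊆ B*. Then n(A*,B) = dim(D(B*)/D(Ã)) + dim(D(A*)/D((Ã)*)) = dim(D(Ã)/D(A)) + dim(D((Ã)*)/D(B)). -/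
/-!
Write `J (f, g) = (g, -f)`; then `T* = J⁻¹ (Tᗮ)` for the Hilbert sum inner product on `X × X`.

The hypotheses on operator parts say that `A_s` has range orthogonal to `B*(0)`. Hence a vector of
`B*(0)` orthogonal to `A(0)` is orthogonal to the whole range of `A`, i.e. lies in `N(A*)`, and
`B*(0) ∩ N(A*) = 0` forces `B*(0) = A(0)` (`relMul_adjRel_le`). Symmetrically `A*(0) = B(0)`.
So all relations between `A` and `B*` share one multivalued part, as do all relations between `B`
and `A*`.

If `S ⊆ T` with `S` closed and `T(0) ⊆ S(0)`, the first projection identifies `T ⊖ S` with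
`D(T)/D(S)` (`quotDim_eq_rank`). For closed `S ⊆ T`, `J` maps `S* ⊖ T*` onto `T ⊖ S`, so
`dim D(T)/D(S) = dim D(S*)/D(T*)` (`quotDim_adjRel`). Applying this to `At ⊆ B*` and `A ⊆ At`
reduces both equalities to additivity of the dimension along `D(B) ⊆ D(At*) ⊆ D(A*)`.
-/

local notation "⟪" x ", " y "⟫" => @inner ℂ _ _ x y

noncomputable section

variable {X : Type*} [NormedAddCommGroup X] [InnerProductSpace ℂ X]

/-! ### Elementary facts on relations and adjoints -/

theorem mem_adjRel {T : Submodule ℂ (X × X)} {p : X × X} :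
    p ∈ adjRel T ↔ ∀ q ∈ T, ⟪p.2, q.1⟫ = ⟪p.1, q.2⟫ := Iff.rfl

theorem mem_relDom {T : Submodule ℂ (X × X)} {f : X} :
    f ∈ relDom T ↔ ∃ y, (f, y) ∈ T := by
  simp [relDom]

theorem mem_relMul {T : Submodule ℂ (X × X)} {y : X} :
    y ∈ relMul T ↔ (0, y) ∈ T := Iff.rfl

theorem relDom_mono {S T : Submodule ℂ (X × X)} (h : S ≤ T) : relDom S ≤ relDom T :=
  Submodule.map_mono h

theorem relMul_mono {S T : Submodule ℂ (X × X)} (h : S ≤ T) : relMul S ≤ relMul T :=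
  Submodule.comap_mono h

theorem adjRel_anti {S T : Submodule ℂ (X × X)} (h : S ≤ T) : adjRel T ≤ adjRel S :=
  fun _ hp q hq => hp q (h hq)

theorem le_adjRel_comm {S T : Submodule ℂ (X × X)} (h : S ≤ adjRel T) : T ≤ adjRel S := by
  intro p hp q hq
  have := congrArg (starRingEnd ℂ) (h hq p hp)
  simpa only [inner_conj_symm] using this.symm

theorem isClosed_relMul {T : Submodule ℂ (X × X)} (hT : IsClosed (T : Set (X × X))) :
    IsClosed (relMul T : Set X) :=
  hT.preimage (f := fun y : X => ((0 : X), y)) (by fun_prop)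

/-! ### Orthogonal complements in `X × X` and the double adjoint -/

/-- The rotation `J (f, g) = (g, -f)`, for which `p ∈ T*` iff `J p ⟂ T`. -/
def rot : (X × X) ≃ₗ[ℂ] (X × X) where
  toFun p := (p.2, -p.1)
  invFun p := (-p.2, p.1)
  map_add' p q := by ext <;> simp [add_comm]
  map_smul' c p := by ext <;> simp
  left_inv p := by ext <;> simp
  right_inv p := by ext <;> simp

/-- The orthogonal complement of a relation for the Hilbert sum inner product
`⟪(a, b), (x, y)⟫ = ⟪a, x⟫ + ⟪b, y⟫`. It is spelled out because the product type `X × X` carries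
the sup norm rather than this inner product. -/
def relPerp (T : Submodule ℂ (X × X)) : Submodule ℂ (X × X) where
  carrier := {p | ∀ q ∈ T, ⟪p.1, q.1⟫ + ⟪p.2, q.2⟫ = 0}
  add_mem' := by
    intro p p' hp hp' q hq
    have h1 := hp q hq
    have h2 := hp' q hq
    simp only [Prod.fst_add, Prod.snd_add, inner_add_left]
    linear_combination h1 + h2
  zero_mem' := by intro q hq; simp
  smul_mem' := by
    intro c p hp q hq
    simp only [Prod.smul_fst, Prod.smul_snd, inner_smul_left, ← mul_add, hp q hq, mul_zero]

theorem mem_relPerp {T : Submodule ℂ (X × X)} {p : X × X} :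
    p ∈ relPerp T ↔ ∀ q ∈ T, ⟪p.1, q.1⟫ + ⟪p.2, q.2⟫ = 0 := Iff.rfl

theorem rot_mem_relPerp {T : Submodule ℂ (X × X)} {p : X × X} :
    rot p ∈ relPerp T ↔ p ∈ adjRel T := by
  simp only [mem_relPerp, mem_adjRel, rot, LinearEquiv.coe_mk, LinearMap.coe_mk, AddHom.coe_mk,
    inner_neg_left, ← sub_eq_add_neg, sub_eq_zero]

theorem eq_zero_of_mem_relPerp {T : Submodule ℂ (X × X)} {p : X × X} (h1 : p ∈ T)
    (h2 : p ∈ relPerp T) : p = 0 := by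
  have h := congrArg Complex.re (h2 p h1)
  have e : ∀ x : X, (⟪x, x⟫).re = ‖x‖ ^ 2 := fun x => inner_self_eq_norm_sq (𝕜 := ℂ) x
  rw [Complex.add_re, e, e, Complex.zero_re] at h
  have ha : ‖p.1‖ = 0 := by nlinarith [sq_nonneg ‖p.1‖, sq_nonneg ‖p.2‖]
  have hb : ‖p.2‖ = 0 := by nlinarith [sq_nonneg ‖p.1‖, sq_nonneg ‖p.2‖]
  exact Prod.ext (norm_eq_zero.1 ha) (norm_eq_zero.1 hb)

/-- The projection theorem in `X × X`, transferred from the Hilbert space `WithLp 2 (X × X)`. -/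
theorem exists_add_relPerp [CompleteSpace X] {S : Submodule ℂ (X × X)}
    (hS : IsClosed (S : Set (X × X))) (p : X × X) :
    ∃ s ∈ S, ∃ r ∈ relPerp S, p = s + r := by
  let e := WithLp.linearEquiv 2 ℂ (X × X)
  let K : Submodule ℂ (WithLp 2 (X × X)) := S.comap e.toLinearMap
  have hK : IsClosed (K : Set (WithLp 2 (X × X))) :=
    hS.preimage (WithLp.prod_continuous_ofLp 2 X X)
  have : CompleteSpace K := hK.completeSpace_coe
  obtain ⟨y, hy, z, hz, h⟩ := K.exists_add_mem_mem_orthogonal (WithLp.toLp 2 p)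
  refine ⟨y.ofLp, hy, z.ofLp, ?_, by simpa using congrArg WithLp.ofLp h⟩
  intro q hq
  have := (Submodule.mem_orthogonal' K z).1 hz (WithLp.toLp 2 q) hq
  simpa [WithLp.prod_inner_apply] using this

theorem adjRel_adjRel [CompleteSpace X] {T : Submodule ℂ (X × X)}
    (hT : IsClosed (T : Set (X × X))) : adjRel (adjRel T) = T := by
  apply le_antisymm
  · intro p hp
    obtain ⟨s, hs, r, hr, rfl⟩ := exists_add_relPerp hT p
    have hr' : r ∈ adjRel (adjRel T) := by
      have := Submodule.sub_mem _ hp (le_adjRel_comm le_rfl hs)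
      simpa using this
    obtain ⟨q, rfl⟩ := rot.surjective r
    have hq := rot_mem_relPerp.1 hr
    -- `J q ∈ T**` says that `J (J q) = -q` is orthogonal to `T*`, which contains `q`.
    have hqp : q ∈ relPerp (adjRel T) := by
      have h2 := rot_mem_relPerp.2 hr'
      have e : rot (rot q) = -q := by ext <;> simp [rot]
      rw [e] at h2
      simpa using h2
    rw [eq_zero_of_mem_relPerp hq hqp, map_zero, add_zero]
    exact hs
  · exact le_adjRel_comm le_rfl

/-! ### Dimensions of domain quotients -/

/-- The first projection induces an isomorphism from `T ⊖ S` to `D(T)/D(S)` as soon as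
`T(0) ⊆ S(0)`. -/
theorem quotDim_eq_rank [CompleteSpace X] {S T : Submodule ℂ (X × X)}
    (hS : IsClosed (S : Set (X × X))) (hST : S ≤ T) (hmul : relMul T ≤ relMul S) :
    quotDim (relDom T) (relDom S) = Module.rank ℂ ↥(T ⊓ relPerp S) := by
  let g : ↥(T ⊓ relPerp S) →ₗ[ℂ] relDom T :=
    ((LinearMap.fst ℂ X X).comp (T ⊓ relPerp S).subtype).codRestrict (relDom T)
      (fun p => ⟨p.1, p.2.1, rfl⟩)
  let φ := ((relDom S).comap (relDom T).subtype).mkQ.comp g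
  refine (LinearEquiv.rank_eq (LinearEquiv.ofBijective φ ⟨?_, ?_⟩)).symm
  · rw [← LinearMap.ker_eq_bot, LinearMap.ker_eq_bot']
    rintro ⟨⟨x, y⟩, hT, hP⟩ h
    have hx : x ∈ relDom S := by
      have h' := (Submodule.Quotient.mk_eq_zero ((relDom S).comap (relDom T).subtype)).1 h
      exact h'
    obtain ⟨z, hz⟩ := mem_relDom.1 hx
    have hm : y - z ∈ relMul T := by
      have := T.sub_mem hT (hST hz)
      simpa [mem_relMul] using this
    have hxy : (x, y) ∈ S := by
      have := S.add_mem hz (mem_relMul.1 (hmul hm))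
      simpa using this
    exact Subtype.ext (eq_zero_of_mem_relPerp hxy hP)
  · intro v
    obtain ⟨⟨x, hx⟩, rfl⟩ := Submodule.mkQ_surjective _ v
    obtain ⟨y, hy⟩ := mem_relDom.1 hx
    obtain ⟨s, hs, r, hr, h⟩ := exists_add_relPerp hS (x, y)
    have hrT : r ∈ T := by
      have := T.sub_mem hy (hST hs)
      rwa [h, add_sub_cancel_left] at this
    refine ⟨⟨r, hrT, hr⟩, ?_⟩
    refine (Submodule.Quotient.eq _).2 ?_
    change r.1 - x ∈ relDom S
    have hx' : x = s.1 + r.1 := congrArg Prod.fst h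
    rw [hx', sub_add_cancel_right]
    exact (relDom S).neg_mem (mem_relDom.2 ⟨s.2, hs⟩)

theorem quotDim_adjRel [CompleteSpace X] {S T : Submodule ℂ (X × X)}
    (hS : IsClosed (S : Set (X × X))) (hT : IsClosed (T : Set (X × X))) (hST : S ≤ T)
    (hmul : relMul T ≤ relMul S) (hmul' : relMul (adjRel S) ≤ relMul (adjRel T)) :
    quotDim (relDom T) (relDom S) = quotDim (relDom (adjRel S)) (relDom (adjRel T)) := by
  rw [quotDim_eq_rank hS hST hmul,
    quotDim_eq_rank (isClosed_adjRel T) (adjRel_anti hST) hmul']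
  have key : (adjRel S ⊓ relPerp (adjRel T)).map (rot : (X × X) ≃ₗ[ℂ] (X × X)).toLinearMap
      = T ⊓ relPerp S := by
    ext r
    obtain ⟨q, rfl⟩ := rot.surjective r
    have e : rot (rot q) = -q := by ext <;> simp [rot]
    -- `J q ∈ T = T**` iff `J (J q) = -q` is orthogonal to `T*`.
    have h1 : rot q ∈ T ↔ q ∈ relPerp (adjRel T) := by
      conv_lhs => rw [← adjRel_adjRel hT]
      rw [← rot_mem_relPerp, e, neg_mem_iff]
    have h2 : rot q ∈ (adjRel S ⊓ relPerp (adjRel T)).map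
        (rot : (X × X) ≃ₗ[ℂ] (X × X)).toLinearMap ↔ q ∈ adjRel S ⊓ relPerp (adjRel T) :=
      ⟨fun ⟨_, h, h'⟩ => rot.injective h' ▸ h, fun h => ⟨q, h, rfl⟩⟩
    rw [h2, Submodule.mem_inf, Submodule.mem_inf, h1, rot_mem_relPerp, and_comm]
  rw [← key]
  exact (rot.submoduleMap (adjRel S ⊓ relPerp (adjRel T))).rank_eq.symm

theorem quotDim_add {U V W : Submodule ℂ X} (hWV : W ≤ V) (hVU : V ≤ U) :
    quotDim U W = quotDim U V + quotDim V W := by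
  unfold quotDim
  set W' := W.comap U.subtype
  set V' := V.comap U.subtype
  have hle : W' ≤ V' := Submodule.comap_mono hWV
  rw [← Submodule.rank_quotient_add_rank (V'.map W'.mkQ),
    (Submodule.quotientQuotientEquivQuotient W' V' hle).rank_eq]
  congr 1
  -- The image of `V` in `U / W` is `V / W`.
  let f : V →ₗ[ℂ] (U ⧸ W') := W'.mkQ.comp (Submodule.inclusion hVU)
  have hker : LinearMap.ker f = W.comap V.subtype := by
    ext v
    simp [f, W', Submodule.Quotient.mk_eq_zero]
  have hrange : LinearMap.range f = V'.map W'.mkQ := by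
    rw [LinearMap.range_comp]
    congr 1
    ext u
    simp [V', Submodule.range_inclusion]
  rw [← hker, ← hrange]
  exact f.quotKerEquivRange.rank_eq.symm

/-- A vector of `B*(0)` orthogonal to `A(0)` is orthogonal to the range of `A`, because `A_s`
takes values in `B*(0)ᗮ`; it then lies in `B*(0) ∩ N(A*) = 0`. -/
theorem relMul_adjRel_le [CompleteSpace X] {A B : Submodule ℂ (X × X)}
    (hA : IsClosed (A : Set (X × X))) (hdual : A ≤ adjRel B)
    (hopA : ∀ f ∈ relDom A, opPart (adjRel B) f = opPart A f)
    (hmul : relMul (adjRel B) ⊓ relKer (adjRel A) = ⊥) :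
    relMul (adjRel B) ≤ relMul A := by
  intro w hw
  have : CompleteSpace (relMul A) := (isClosed_relMul hA).completeSpace_coe
  obtain ⟨a, ha, r, hr, rfl⟩ := (relMul A).exists_add_mem_mem_orthogonal w
  have hrB : r ∈ relMul (adjRel B) := by
    have := Submodule.sub_mem _ hw (relMul_mono hdual ha)
    simpa using this
  have hrK : r ∈ relKer (adjRel A) := by
    rintro ⟨x, y⟩ hxy
    have hx : x ∈ relDom A := mem_relDom.2 ⟨y, hxy⟩
    have hs := opPart_spec hA hx
    have hs' := (opPart_spec (isClosed_adjRel B) (relDom_mono hdual hx)).2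
    rw [hopA x hx] at hs'
    have hm : y - opPart A x ∈ relMul A := by
      have := A.sub_mem hxy hs.1
      simpa [mem_relMul] using this
    have h1 := (Submodule.mem_orthogonal' _ _).1 hr _ hm
    have h2 := (Submodule.mem_orthogonal _ _).1 hs' _ hrB
    rw [inner_sub_right, h2, sub_zero] at h1
    simp [h1]
  have hr0 : r = 0 := (Submodule.mem_bot ℂ).1 (hmul ▸ Submodule.mem_inf.2 ⟨hrB, hrK⟩)
  rw [hr0, add_zero]
  exact ha

/-- Theorem 3.3(i). For any proper extension `At` of the dual pair `{A,B}`,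
`n(A*,B) = dim(D(B*)/D(At)) + dim(D(A*)/D(At*)) = dim(D(At)/D(A)) + dim(D(At*)/D(B))`. -/
theorem n_eq_sum_of_quotDims [CompleteSpace X] (A B At : Submodule ℂ (X × X))
    (hA : IsClosed (A : Set (X × X))) (hB : IsClosed (B : Set (X × X)))
    (hdual : A ≤ adjRel B)
    (hopB : ∀ f ∈ relDom B, opPart (adjRel A) f = opPart B f)
    (hopA : ∀ f ∈ relDom A, opPart (adjRel B) f = opPart A f)
    (hmul1 : relMul (adjRel B) ⊓ relKer (adjRel A) = ⊥)
    (hmul2 : relMul (adjRel A) ⊓ relKer (adjRel B) = ⊥)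
    (hAt : IsClosed (At : Set (X × X))) (hAAt : A ≤ At) (hAtB : At ≤ adjRel B) :
    quotDim (relDom (adjRel A)) (relDom B) =
      quotDim (relDom (adjRel B)) (relDom At) +
      quotDim (relDom (adjRel A)) (relDom (adjRel At)) ∧
    quotDim (relDom (adjRel A)) (relDom B) =
      quotDim (relDom At) (relDom A) + quotDim (relDom (adjRel At)) (relDom B) := by
  have hmB : relMul (adjRel B) ≤ relMul A := relMul_adjRel_le hA hdual hopA hmul1
  have hmA : relMul (adjRel A) ≤ relMul B :=
    relMul_adjRel_le hB (le_adjRel_comm hdual) hopB hmul2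
  have hBAt : B ≤ adjRel At := le_adjRel_comm hAtB
  have hAtA : adjRel At ≤ adjRel A := adjRel_anti hAAt
  have e1 : quotDim (relDom (adjRel B)) (relDom At) =
      quotDim (relDom (adjRel At)) (relDom B) := by
    have h := quotDim_adjRel hAt (isClosed_adjRel B) hAtB (hmB.trans (relMul_mono hAAt))
      (by rw [adjRel_adjRel hB]; exact (relMul_mono hAtA).trans hmA)
    rwa [adjRel_adjRel hB] at h
  have e2 : quotDim (relDom At) (relDom A) =
      quotDim (relDom (adjRel A)) (relDom (adjRel At)) :=
    quotDim_adjRel hA hAt hAAt ((relMul_mono hAtB).trans hmB) (hmA.trans (relMul_mono hBAt))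
  have hadd := quotDim_add (relDom_mono hBAt) (relDom_mono hAtA)
  rw [e1, e2]
  exact ⟨hadd.trans (add_comm _ _), hadd⟩

end
end
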